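/- arXiv:2512.03635 — 2 statements merged into one kernel-verified Lean document; each statement's English description precedes it below -/
import Mathlib

section
/- For every natural number n and every real number x, the n-th derivative of the sigmoid function at x equals the sum over k from 1 to n+1 of (-1)^(k+1) · (k-1)! · S(n+1,k) · σ(x)^k, where S(·,·) denotes the Stirling numbers of the second kind. -/
noncomputable def sigmoid (x : ℝ) : ℝ := Real.exp x / (1 + Real.exp x)

/-- Stirling numbers of the second kind, via the recurrence
`S(n+1,k+1) = (k+1)·S(n,k+1) + S(n,k)`. -/
def stirling2 : ℕ → ℕ → ℕ
  | 0, 0 => 1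
  | 0, _ + 1 => 0
  | _ + 1, 0 => 0
  | n + 1, k + 1 => (k + 1) * stirling2 n (k + 1) + stirling2 n k

theorem st_zero_of_lt : ∀ {n k : ℕ}, n < k → stirling2 n k = 0
  | _, 0, h => absurd h (Nat.not_lt_zero _)
  | 0, _ + 1, _ => by rw [stirling2]
  | n + 1, k + 1, h => by
    rw [stirling2, st_zero_of_lt (by omega : n < k + 1), st_zero_of_lt (by omega : n < k)]
    simp

theorem sig_hasDerivAt (x : ℝ) : HasDerivAt sigmoid (sigmoid x * (1 - sigmoid x)) x := by
  have h0 : 1 + Real.exp x ≠ 0 := by positivity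
  have h := (Real.hasDerivAt_exp x).div ((Real.hasDerivAt_exp x).const_add 1) h0
  have e : sigmoid x * (1 - sigmoid x) = (Real.exp x * (1 + Real.exp x) - Real.exp x * Real.exp x) / (1 + Real.exp x) ^ 2 := by
    unfold sigmoid
    field_simp
  rw [e]
  exact h

theorem sig_aux (n : ℕ) : iteratedDeriv n sigmoid = fun x =>
    ∑ j ∈ Finset.range (n + 1), (-1 : ℝ) ^ j * (Nat.factorial j : ℝ) *
      (stirling2 (n + 1) (j + 1) : ℝ) * (sigmoid x) ^ (j + 1) := by
  induction n with
  | zero => ext x; simp [stirling2]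
  | succ n ih =>
    rw [iteratedDeriv_succ, ih]
    ext x
    have hd : HasDerivAt (fun x => ∑ j ∈ Finset.range (n + 1),
        (-1 : ℝ) ^ j * (Nat.factorial j : ℝ) *
        (stirling2 (n + 1) (j + 1) : ℝ) * (sigmoid x) ^ (j + 1))
        (∑ j ∈ Finset.range (n + 1), (-1 : ℝ) ^ j * (Nat.factorial j : ℝ) *
        (stirling2 (n + 1) (j + 1) : ℝ) * (((j + 1 : ℕ) : ℝ) * (sigmoid x) ^ j *
          (sigmoid x * (1 - sigmoid x)))) x := by
      apply HasDerivAt.fun_sum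
      intro j _
      exact ((sig_hasDerivAt x).fun_pow (j + 1)).const_mul _
    rw [hd.deriv]
    have hs : ∀ j, (stirling2 (n + 1 + 1) (j + 1) : ℝ) =
        ((j : ℝ) + 1) * stirling2 (n + 1) (j + 1) + stirling2 (n + 1) j := by
      intro j
      rw [stirling2]; push_cast; ring
    simp only [hs, mul_add, add_mul, Finset.sum_add_distrib]
    rw [Finset.sum_range_succ _ (n + 1), Finset.sum_range_succ _ (n + 1),
      Finset.sum_range_succ' _ (n + 1)]
    rw [st_zero_of_lt (by omega : n + 1 < n + 1 + 1), show stirling2 (n + 1) 0 = 0 by rw [stirling2]]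
    simp only [Nat.cast_zero, mul_zero, zero_mul, add_zero]
    simp only [← Finset.sum_add_distrib]
    apply Finset.sum_congr rfl
    intro j _
    rw [Nat.factorial_succ]
    push_cast
    ring

theorem nth_derivative_sigmoid (n : ℕ) (x : ℝ) :
    iteratedDeriv n sigmoid x =
      ∑ k ∈ Finset.Icc 1 (n + 1),
        (-1 : ℝ) ^ (k + 1) * (Nat.factorial (k - 1) : ℝ) *
          (stirling2 (n + 1) k : ℝ) * (sigmoid x) ^ k := by
  rw [sig_aux, ← Finset.Ico_add_one_right_eq_Icc, Finset.sum_Ico_eq_sum_range]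
  apply Finset.sum_congr rfl
  intro j _
  rw [add_comm 1 j, Nat.add_sub_cancel]
  ring
end

section
/- (Universal Approximation Theorem, constructive form) Let σ : ℝ → ℝ be a bounded sigmoidal function, let a < b be reals, let f be continuous on [a,b], and let ε > 0. Then there exist a positive integer N and a real w > 0 such that, with x_k = a + (k − 1)·(b − a)/N for k = 0, 1, …, N+1 (the uniform partition of [a − (b−a)/N, b]), the inequality |Σ_{k=2}^{N+1} (f(x_k) − f(x_{k−1}))·σ(w(x − x_k)) + f(a)·σ(w(x − x₀)) − f(x)| < ε holds for every x ∈ [a,b]. -/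
open Filter

/-- A function is sigmoidal if it tends to 1 at +∞ and to 0 at −∞. -/
def Sigmoidal (f : ℝ → ℝ) : Prop :=
  Tendsto f atTop (nhds 1) ∧ Tendsto f atBot (nhds 0)

/-- A function is bounded if the range of its absolute value is bounded above. -/
def BoundedFunction (f : ℝ → ℝ) : Prop :=
  BddAbove (Set.range fun x => |f x|)

set_option maxHeartbeats 1000000 in
theorem sigmoidal_approximation_theorem
    (σ : ℝ → ℝ) (hσ : Sigmoidal σ) (hbdd : BoundedFunction σ)
    (a b : ℝ) (hab : a < b)
    (f : ℝ → ℝ) (hf : ContinuousOn f (Set.Icc a b))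
    (ε : ℝ) (hε : 0 < ε) :
    ∃ N : ℕ, 0 < N ∧ ∃ w : ℝ, 0 < w ∧
      ∀ x ∈ Set.Icc a b,
        |(∑ k ∈ Finset.Icc 2 (N + 1),
            (f (a + ((k : ℝ) - 1) * ((b - a) / N)) -
              f (a + (((k : ℝ) - 1) - 1) * ((b - a) / N))) *
              σ (w * (x - (a + ((k : ℝ) - 1) * ((b - a) / N))))) +
          f a * σ (w * (x - (a + ((0 : ℝ) - 1) * ((b - a) / N)))) - f x| < ε := by
  obtain ⟨M, hM⟩ := hbdd
  have hM' : ∀ t, |σ t| ≤ M := fun t => hM ⟨t, rfl⟩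
  have hM0 : 0 ≤ M := (abs_nonneg _).trans (hM' 0)
  obtain ⟨η, hη0, hη⟩ : ∃ η : ℝ, 0 < η ∧ η * (2 * M + 4) = ε / 2 :=
    ⟨ε / 2 / (2 * M + 4), by positivity, by field_simp⟩
  have huc := isCompact_Icc.uniformContinuousOn_of_continuous hf
  rw [Metric.uniformContinuousOn_iff] at huc
  obtain ⟨d, hd0, hd⟩ := huc η hη0
  obtain ⟨N, hN⟩ := exists_nat_gt (max ((b - a) / d) (|f a| / (ε / 2)))
  have hN1 := (le_max_left _ _).trans_lt hN
  have hN2 := (le_max_right _ _).trans_lt hN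
  have hba : 0 < b - a := sub_pos.2 hab
  have hNr : (0 : ℝ) < N := lt_trans (by positivity) hN1
  have hNpos : 0 < N := by exact_mod_cast hNr
  refine ⟨N, hNpos, ?_⟩
  obtain ⟨h, hh⟩ : ∃ h, h = (b - a) / (N : ℝ) := ⟨_, rfl⟩
  rw [← hh]
  have hh0 : 0 < h := by rw [hh]; positivity
  have hNh : N * h = b - a := by rw [hh]; field_simp
  have hhd : h < d := by
    rw [hh, div_lt_iff₀ hNr]; rw [div_lt_iff₀ hd0] at hN1; linarith
  obtain ⟨δ, hδ⟩ : ∃ δ, δ = 1 / (N : ℝ) := ⟨_, rfl⟩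
  have hδ0 : 0 < δ := by rw [hδ]; positivity
  have hNδ : N * δ = 1 := by rw [hδ]; field_simp
  have hfδ : |f a| * δ < ε / 2 := by
    rw [hδ, mul_one_div, div_lt_iff₀ hNr]; rw [div_lt_iff₀ (by positivity)] at hN2; linarith
  obtain ⟨A1, hA1⟩ := eventually_atTop.1 (hσ.1.eventually (Metric.closedBall_mem_nhds 1 hδ0))
  obtain ⟨A2, hA2⟩ := eventually_atBot.1 (hσ.2.eventually (Metric.closedBall_mem_nhds 0 hδ0))
  simp only [Metric.mem_closedBall, Real.dist_eq, sub_zero] at hA1 hA2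
  obtain ⟨A, hA⟩ : ∃ A, A = max 1 (max A1 (-A2)) := ⟨_, rfl⟩
  have hA0 : 0 < A := by rw [hA]; exact lt_of_lt_of_le one_pos (le_max_left _ _)
  have hAA1 : A1 ≤ A := by rw [hA]; exact (le_max_left _ _).trans (le_max_right _ _)
  have hAA2 : -A2 ≤ A := by rw [hA]; exact (le_max_right _ _).trans (le_max_right _ _)
  obtain ⟨w, hw⟩ : ∃ w, w = A / h := ⟨_, rfl⟩
  have hw0 : 0 < w := by rw [hw]; positivity
  have hwh : w * h = A := by rw [hw]; field_simp
  have hup : ∀ t, h ≤ t → |σ (w * t) - 1| ≤ δ := fun t ht =>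
    hA1 _ (by linarith [mul_le_mul_of_nonneg_left ht hw0.le])
  have hdn : ∀ t, t ≤ -h → |σ (w * t)| ≤ δ := fun t ht =>
    hA2 _ (by linarith [mul_le_mul_of_nonneg_left ht hw0.le])
  refine ⟨w, hw0, ?_⟩
  rintro x ⟨hax, hxb⟩
  have hre : ∑ k ∈ Finset.Icc 2 (N + 1),
            (f (a + ((k : ℝ) - 1) * h) - f (a + (((k : ℝ) - 1) - 1) * h)) *
              σ (w * (x - (a + ((k : ℝ) - 1) * h))) =
      ∑ j ∈ Finset.range N, (f (a + ((j + 1 : ℕ) : ℝ) * h) - f (a + (j : ℝ) * h)) *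
              σ (w * (x - (a + ((j + 1 : ℕ) : ℝ) * h))) := by
    have : Finset.Icc 2 (N + 1) = Finset.Ico 2 (N + 2) := by
      ext k; simp only [Finset.mem_Icc, Finset.mem_Ico]; omega
    rw [this, Finset.sum_Ico_eq_sum_range]
    refine Finset.sum_congr (by simp) fun j _ => ?_
    have e1 : (((2 + j : ℕ) : ℝ) - 1) = ((j + 1 : ℕ) : ℝ) := by push_cast; ring
    have e2 : ((j + 1 : ℕ) : ℝ) - 1 = j := by push_cast; ring
    rw [e1, e2]
  rw [hre]
  have hmem : ∀ j : ℕ, j ≤ N → a + (j : ℝ) * h ∈ Set.Icc a b := by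
    intro j hj
    have : (j : ℝ) ≤ N := by exact_mod_cast hj
    constructor
    · have : 0 ≤ (j : ℝ) * h := by positivity
      linarith
    · linarith [mul_le_mul_of_nonneg_right this hh0.le]
  obtain ⟨m, hm⟩ : ∃ m, m = ⌊(x - a) / h⌋₊ := ⟨_, rfl⟩
  have hq0 : 0 ≤ (x - a) / h := div_nonneg (by linarith) hh0.le
  have hm1 : (m : ℝ) * h ≤ x - a := by
    rw [hm, ← le_div_iff₀ hh0]; exact Nat.floor_le hq0
  have hm2 : x - a < ((m : ℝ) + 1) * h := by
    rw [hm, ← div_lt_iff₀ hh0]; exact Nat.lt_floor_add_one _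
  have hmN : m ≤ N := by
    have : (m : ℝ) * h ≤ N * h := by linarith
    exact_mod_cast le_of_mul_le_mul_right this hh0
  have htel : ∑ j ∈ Finset.range N, (f (a + ((j + 1 : ℕ) : ℝ) * h) - f (a + (j : ℝ) * h)) *
      (if j < m then (1 : ℝ) else 0) = f (a + (m : ℝ) * h) - f a := by
    simp only [mul_ite, mul_one, mul_zero]
    rw [← Finset.sum_filter]
    have : (Finset.range N).filter (fun j => j < m) = Finset.range m := by
      ext k; simp only [Finset.mem_filter, Finset.mem_range]; omega
    rw [this, Finset.sum_range_sub (fun j : ℕ => f (a + (j : ℝ) * h))]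
    simp
  have hΔ : ∀ j < N, |f (a + ((j + 1 : ℕ) : ℝ) * h) - f (a + (j : ℝ) * h)| ≤ η := by
    intro j hj
    refine (hd _ (hmem (j + 1) hj) _ (hmem j hj.le) ?_).le
    rw [Real.dist_eq]
    have : a + ((j + 1 : ℕ) : ℝ) * h - (a + (j : ℝ) * h) = h := by push_cast; ring
    rw [this, abs_of_pos hh0]; exact hhd
  have hfm : |f (a + (m : ℝ) * h) - f x| ≤ η := by
    refine (hd _ (hmem m hmN) _ ⟨hax, hxb⟩ ?_).le
    rw [Real.dist_eq, abs_lt]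
    constructor <;> linarith
  have hfa : |f a * (σ (w * (x - (a + ((0 : ℝ) - 1) * h))) - 1)| ≤ |f a| * δ := by
    rw [abs_mul]
    exact mul_le_mul_of_nonneg_left (hup _ (by linarith)) (abs_nonneg _)
  have hS : ∀ j : ℕ, |σ (w * (x - (a + ((j + 1 : ℕ) : ℝ) * h))) - (if j < m then (1 : ℝ) else 0)|
      ≤ δ + ((if j = m then M + 1 else 0) + (if j = m - 1 then M + 1 else 0)) := by
    intro j
    have hcr : |σ (w * (x - (a + ((j + 1 : ℕ) : ℝ) * h))) - (if j < m then (1 : ℝ) else 0)|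
        ≤ M + 1 := by
      refine (abs_sub _ _).trans (add_le_add (hM' _) ?_)
      split_ifs <;> simp
    have i1 : (0 : ℝ) ≤ (if j = m then M + 1 else 0) := by split_ifs <;> linarith
    have i2 : (0 : ℝ) ≤ (if j = m - 1 then M + 1 else 0) := by split_ifs <;> linarith
    by_cases h1 : j = m
    · rw [if_pos h1] at *; linarith
    by_cases h2 : j = m - 1
    · rw [if_pos h2] at *; linarith
    by_cases h3 : j < m
    · have h4 : j + 1 + 1 ≤ m := by omega
      have h5 : ((j + 1 : ℕ) : ℝ) + 1 ≤ m := by exact_mod_cast h4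
      have := hup (x - (a + ((j + 1 : ℕ) : ℝ) * h)) (by linarith [mul_le_mul_of_nonneg_right h5 hh0.le])
      rw [if_pos h3]; linarith
    · have h4 : m + 1 + 1 ≤ j + 1 := by omega
      have h5 : (m : ℝ) + 1 + 1 ≤ ((j + 1 : ℕ) : ℝ) := by exact_mod_cast h4
      have := hdn (x - (a + ((j + 1 : ℕ) : ℝ) * h)) (by linarith [mul_le_mul_of_nonneg_right h5 hh0.le])
      rw [if_neg h3, sub_zero]; linarith
  have hsum : |∑ j ∈ Finset.range N, (f (a + ((j + 1 : ℕ) : ℝ) * h) - f (a + (j : ℝ) * h)) *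
      (σ (w * (x - (a + ((j + 1 : ℕ) : ℝ) * h))) - (if j < m then (1 : ℝ) else 0))|
      ≤ η * (1 + ((M + 1) + (M + 1))) := by
    calc _ ≤ ∑ j ∈ Finset.range N, η *
          (δ + ((if j = m then M + 1 else 0) + (if j = m - 1 then M + 1 else 0))) := by
          refine (Finset.abs_sum_le_sum_abs _ _).trans (Finset.sum_le_sum fun j hj => ?_)
          rw [abs_mul]
          exact mul_le_mul (hΔ j (Finset.mem_range.1 hj)) (hS j) (abs_nonneg _) hη0.le
      _ ≤ _ := by
          rw [← Finset.mul_sum]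
          refine mul_le_mul_of_nonneg_left ?_ hη0.le
          rw [Finset.sum_add_distrib, Finset.sum_add_distrib, Finset.sum_ite_eq',
            Finset.sum_ite_eq', Finset.sum_const, Finset.card_range, nsmul_eq_mul, hNδ]
          split_ifs <;> linarith
  simp only [mul_sub (f _ - f _)] at hsum
  rw [Finset.sum_sub_distrib] at hsum
  rw [htel] at hsum
  rw [abs_le] at hsum hfa hfm
  rw [abs_lt]
  constructor <;> linarith
end
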